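/- Let a₁, a₂, b₁, b₂ ∈ ℂ with 0 ≤ Re a₁ < 1, 0 ≤ Re a₂ < 1 and b₁ b₂ ≠ 0, and fix i ∈ {0, 1}. Then L_i(a₁, b₁) ≅ L_i(a₂, b₂) as Virasoro modules if and only if a₁ = a₂ and b₁ = b₂. -/

import Mathlib

/-- A representation of the Witt algebra `𝔚 = span{d_i : i ≥ -1}`, encoded by the family of
operators `d i` (only the indices `i ≥ -1` are relevant) satisfying
`[d_m, d_n] = (n - m) d_{m+n}`. -/
structure WittRep (W : Type*) [AddCommGroup W] [Module ℂ W] where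
  d : ℤ → W →ₗ[ℂ] W
  comm : ∀ m n : ℤ, -1 ≤ m → -1 ≤ n →
    d m ∘ₗ d n - d n ∘ₗ d m = (((n - m : ℤ) : ℂ)) • d (m + n)

namespace WittRep

variable {W : Type*} [AddCommGroup W] [Module ℂ W]

/-- Condition A : the module lies in the category `O_𝔚`. -/
def InO (ρ : WittRep W) : Prop :=
  ∀ v : W, ∃ n : ℕ, ∀ i : ℤ, (n : ℤ) ≤ i → ρ.d i v = 0

/-- The module is trivial: the Lie algebra acts by zero. -/
def IsTrivial (ρ : WittRep W) : Prop := ∀ i : ℤ, -1 ≤ i → ρ.d i = 0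

/-- A `𝔚`-submodule. -/
def Invariant (ρ : WittRep W) (U : Submodule ℂ W) : Prop :=
  ∀ i : ℤ, -1 ≤ i → ∀ u ∈ U, ρ.d i u ∈ U

/-- Simplicity of a `𝔚`-module. -/
def IsSimple (ρ : WittRep W) : Prop :=
  (∃ v : W, v ≠ 0) ∧ ∀ U : Submodule ℂ W, ρ.Invariant U → U = ⊥ ∨ U = ⊤

/-- A `𝔟`-submodule (`𝔟 = span{d_i : i ≥ 0}`). -/
def BInvariant (ρ : WittRep W) (U : Submodule ℂ W) : Prop :=
  ∀ i : ℤ, 0 ≤ i → ∀ u ∈ U, ρ.d i u ∈ U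

/-- The socle `Soc_𝔟(W)`: the sum of the minimal nonzero `𝔟`-submodules. -/
def Soc (ρ : WittRep W) : Submodule ℂ W :=
  sSup {U | ρ.BInvariant U ∧ U ≠ ⊥ ∧
    ∀ U' : Submodule ℂ W, ρ.BInvariant U' → U' ≠ ⊥ → U' ≤ U → U' = U}

/-- `w₀` is a highest weight vector of weight `b'`. -/
def IsHW (ρ : WittRep W) (w₀ : W) (b' : ℂ) : Prop :=
  w₀ ≠ 0 ∧ ρ.d 0 w₀ = b' • w₀ ∧ ∀ i : ℤ, 1 ≤ i → ρ.d i w₀ = 0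

/-- `w₀` generates the `𝔚`-module. -/
def Generates (ρ : WittRep W) (w₀ : W) : Prop :=
  ∀ U : Submodule ℂ W, ρ.Invariant U → w₀ ∈ U → U = ⊤

/-- The operator `e^{kt} d/dt = Σ_{i ≥ 0} (k^i/i!) d_{i-1}` (a finite sum on each vector of a
module in `O_𝔚`). -/
noncomputable def E (ρ : WittRep W) (k : ℤ) (w : W) : W :=
  ∑ᶠ i : ℕ, (((k : ℂ) ^ i) / (Nat.factorial i : ℂ)) • ρ.d ((i : ℤ) - 1) w

/-- The action of `d_k` on `L(W, λ, a, b) = W ⊗ ℂ[t, t⁻¹]`, realized on `ℤ →₀ W`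
(`w ⊗ t^j ↦ Finsupp.single j w`):
`d_k · (w ⊗ t^j) = ((λ^k e^{kt} − 1) d/dt + a + kb + j) w ⊗ t^{k+j}`. -/
noncomputable def Lact (ρ : WittRep W) (lam a b : ℂ) (k : ℤ) (f : ℤ →₀ W) : ℤ →₀ W :=
  f.sum fun j w => Finsupp.single (k + j)
    (lam ^ k • ρ.E k w - ρ.d (-1) w + (a + (k : ℂ) * b + (j : ℂ)) • w)

/-- The PBW map `ℕ →₀ ℂ → W`, `(k, c) ↦ c • d_{-1}^k w₀`. -/
noncomputable def pbwMap (ρ : WittRep W) (w₀ : W) : (ℕ →₀ ℂ) →ₗ[ℂ] W :=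
  Finsupp.lsum ℂ fun k : ℕ => ((ρ.d (-1)) ^ k) ∘ₗ LinearMap.toSpanSingleton ℂ W w₀

/-- `W` is the Verma `𝔚`-module with highest weight vector `w₀` of highest weight `b'`. -/
def IsVerma (ρ : WittRep W) (w₀ : W) (b' : ℂ) : Prop :=
  ρ.d 0 w₀ = b' • w₀ ∧ (∀ i : ℤ, 1 ≤ i → ρ.d i w₀ = 0) ∧
    Function.Bijective (ρ.pbwMap w₀)

/-- `W^{(n)} = Σ_{i=0}^n d_{-1}^i (Soc_𝔟 W)`. -/
noncomputable def Wn (ρ : WittRep W) (n : ℕ) : Submodule ℂ W :=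
  ⨆ i : Fin (n + 1), Submodule.map ((ρ.d (-1)) ^ (i : ℕ)) ρ.Soc

/-- `L₀(a, b') = span{d₁^i · (w₀ ⊗ t^{2j})} ⊆ L(W, -1, a, b' + 1)`. -/
noncomputable def Lzero (ρ : WittRep W) (a b' : ℂ) (w₀ : W) : Submodule ℂ (ℤ →₀ W) :=
  Submodule.span ℂ
    {g | ∃ (i : ℕ) (j : ℤ), g = (ρ.Lact (-1) a (b' + 1) 1)^[i] (Finsupp.single (2 * j) w₀)}

/-- `L₁(a, b') = span{d₁^i · (w₀ ⊗ t^{2j+1})} ⊆ L(W, -1, a, b' + 1)`. -/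
noncomputable def Lone (ρ : WittRep W) (a b' : ℂ) (w₀ : W) : Submodule ℂ (ℤ →₀ W) :=
  Submodule.span ℂ
    {g | ∃ (i : ℕ) (j : ℤ), g = (ρ.Lact (-1) a (b' + 1) 1)^[i] (Finsupp.single (2 * j + 1) w₀)}

end WittRep

/-- A representation of the Lie algebra `𝔟 = span{d_i : i ≥ 0}`. -/
structure BRep (B : Type*) [AddCommGroup B] [Module ℂ B] where
  d : ℕ → B →ₗ[ℂ] B
  comm : ∀ m n : ℕ, d m ∘ₗ d n - d n ∘ₗ d m = (((n : ℂ) - (m : ℂ))) • d (m + n)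

namespace BRep

variable {B : Type*} [AddCommGroup B] [Module ℂ B]

/-- Condition A : the module lies in the category `O_𝔟`. -/
def InO (ρ : BRep B) : Prop := ∀ v : B, ∃ n : ℕ, ∀ i : ℕ, n ≤ i → ρ.d i v = 0

def IsTrivial (ρ : BRep B) : Prop := ∀ i : ℕ, ρ.d i = 0

def IsSimple (ρ : BRep B) : Prop :=
  (∃ v : B, v ≠ 0) ∧
    ∀ U : Submodule ℂ B, (∀ i : ℕ, ∀ u ∈ U, ρ.d i u ∈ U) → U = ⊥ ∨ U = ⊤

/-- The set of `r ∈ ℤ≥0` such that `d_{r+i} v = 0` for all `i ≥ 1`;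
`ord_𝔟(v)` is its least element. -/
def ordSet (ρ : BRep B) (v : B) : Set ℕ := {r : ℕ | ∀ i : ℕ, r + 1 ≤ i → ρ.d i v = 0}

/-- The action of `d_m` on the Virasoro module `N(B_(c), a) = B ⊗ ℂ[t, t⁻¹]`, realized on
`ℤ →₀ B`:  `d_m · (w ⊗ t^j) = (Σ_{i≥1} (m^i/i!) d_{i-1} + mc + a + j) w ⊗ t^{m+j}`
(`c` is the twist of the `d₀`-action; `c = 0` gives `N(B, a)`). -/
noncomputable def Nact (ρ : BRep B) (a c : ℂ) (m : ℤ) (f : ℤ →₀ B) : ℤ →₀ B :=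
  f.sum fun j w => Finsupp.single (m + j)
    ((∑ᶠ i : ℕ, (((m : ℂ) ^ (i + 1)) / (Nat.factorial (i + 1) : ℂ)) • ρ.d i w) +
      ((m : ℂ) * c + a + (j : ℂ)) • w)

end BRep

/-- For a family `U : ℤ → Submodule ℂ W`, the subspace `⊕_j U j ⊗ t^j` of `W ⊗ ℂ[t,t⁻¹]`. -/
def gradedSub {W : Type*} [AddCommGroup W] [Module ℂ W] (U : ℤ → Submodule ℂ W) :
    Submodule ℂ (ℤ →₀ W) where
  carrier := {f | ∀ j, f j ∈ U j}
  add_mem' := fun hf hg j => by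
    simpa only [Finsupp.add_apply] using (U j).add_mem (hf j) (hg j)
  zero_mem' := fun j => by simp
  smul_mem' := fun c f hf j => by
    simpa only [Finsupp.smul_apply] using (U j).smul_mem c (hf j)

/-- A submodule invariant under a (ℤ-indexed) family of operators. -/
def ActInvariant {V : Type*} [AddCommGroup V] [Module ℂ V] (act : ℤ → V → V)
    (M : Submodule ℂ V) : Prop :=
  ∀ k : ℤ, ∀ u ∈ M, act k u ∈ M

/-- Simplicity of the module given by a family of operators (the central element acts by zero). -/
def ActSimple {V : Type*} [AddCommGroup V] [Module ℂ V] (act : ℤ → V → V) : Prop :=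
  (∃ v : V, v ≠ 0) ∧ ∀ M : Submodule ℂ V, ActInvariant act M → M = ⊥ ∨ M = ⊤

/-- A representation of the Virasoro algebra. -/
structure VirasoroRep (V : Type*) [AddCommGroup V] [Module ℂ V] where
  d : ℤ → V →ₗ[ℂ] V
  z : V →ₗ[ℂ] V
  comm : ∀ m n : ℤ, d m ∘ₗ d n - d n ∘ₗ d m =
    (((n - m : ℤ) : ℂ)) • d (m + n) +
      (if m + n = 0 then (((n : ℂ) ^ 3 - (n : ℂ)) / 12) else 0) • z
  comm_z : ∀ m : ℤ, d m ∘ₗ z = z ∘ₗ d m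

namespace WittRep

open Polynomial

variable {W : Type*} [AddCommGroup W] [Module ℂ W]

/-- The vector `f(d_{-1}) w₀`. -/
noncomputable def polyVec (ρ : WittRep W) (w₀ : W) : ℂ[X] →ₗ[ℂ] W :=
  LinearMap.applyₗ w₀ ∘ₗ (aeval (ρ.d (-1))).toLinearMap

theorem polyVec_apply (ρ : WittRep W) (w₀ : W) (f : ℂ[X]) :
    ρ.polyVec w₀ f = aeval (ρ.d (-1)) f w₀ := rfl

theorem polyVec_one (ρ : WittRep W) (w₀ : W) : ρ.polyVec w₀ 1 = w₀ := by
  simp [polyVec_apply]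

theorem polyVec_mul (ρ : WittRep W) (w₀ : W) (f g : ℂ[X]) :
    ρ.polyVec w₀ (f * g) = aeval (ρ.d (-1)) f (ρ.polyVec w₀ g) := by
  simp [polyVec_apply]

theorem polyVec_X_mul (ρ : WittRep W) (w₀ : W) (g : ℂ[X]) :
    ρ.polyVec w₀ (X * g) = ρ.d (-1) (ρ.polyVec w₀ g) := by
  simp [polyVec_mul]

theorem polyVec_C_mul (ρ : WittRep W) (w₀ : W) (c : ℂ) (g : ℂ[X]) :
    ρ.polyVec w₀ (C c * g) = c • ρ.polyVec w₀ g := by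
  rw [← smul_eq_C_mul, map_smul]

theorem d_comm_apply (ρ : WittRep W) {n : ℤ} (hn : -1 ≤ n) (w : W) :
    ρ.d n (ρ.d (-1) w) = ρ.d (-1) (ρ.d n w) - ((n : ℂ) + 1) • ρ.d (n - 1) w := by
  have h := congrArg (fun T : W →ₗ[ℂ] W => T w) (ρ.comm (-1) n le_rfl hn)
  simp only [LinearMap.sub_apply, LinearMap.comp_apply, LinearMap.smul_apply] at h
  rw [show -1 + n = n - 1 by ring] at h
  push_cast at h
  rw [sub_neg_eq_add] at h
  rw [← h]; abel

theorem exists_E_eq_sum (ρ : WittRep W) (hO : ρ.InO) (w : W) :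
    ∃ n : ℕ, ∀ N, n ≤ N → ∀ k : ℤ, ρ.E k w =
      ∑ i ∈ Finset.range N, (((k : ℂ) ^ i) / (Nat.factorial i : ℂ)) • ρ.d ((i : ℤ) - 1) w := by
  obtain ⟨n, hn⟩ := hO w
  refine ⟨n + 1, fun N hN k => ?_⟩
  apply finsum_eq_sum_of_support_subset
  intro i hi
  by_contra hlt
  simp only [Finset.coe_range, Set.mem_Iio, not_lt] at hlt
  apply hi
  change _ • ρ.d _ w = 0
  rw [hn _ (by omega), smul_zero]

theorem E_add (ρ : WittRep W) (hO : ρ.InO) (k : ℤ) (v w : W) :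
    ρ.E k (v + w) = ρ.E k v + ρ.E k w := by
  obtain ⟨n₁, h₁⟩ := ρ.exists_E_eq_sum hO v
  obtain ⟨n₂, h₂⟩ := ρ.exists_E_eq_sum hO w
  obtain ⟨n₃, h₃⟩ := ρ.exists_E_eq_sum hO (v + w)
  rw [h₁ (n₁ + n₂ + n₃) (by omega), h₂ (n₁ + n₂ + n₃) (by omega),
    h₃ (n₁ + n₂ + n₃) (by omega), ← Finset.sum_add_distrib]
  simp only [map_add, smul_add]

theorem E_smul (ρ : WittRep W) (hO : ρ.InO) (k : ℤ) (c : ℂ) (w : W) :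
    ρ.E k (c • w) = c • ρ.E k w := by
  obtain ⟨n₁, h₁⟩ := ρ.exists_E_eq_sum hO w
  obtain ⟨n₂, h₂⟩ := ρ.exists_E_eq_sum hO (c • w)
  rw [h₁ (n₁ + n₂) (by omega), h₂ (n₁ + n₂) (by omega), Finset.smul_sum]
  simp only [map_smul, smul_comm c]

theorem E_zero (ρ : WittRep W) (k : ℤ) : ρ.E k 0 = 0 := by
  simp [E]

theorem E_d_neg_one (ρ : WittRep W) (hO : ρ.InO) (k : ℤ) (w : W) :
    ρ.E k (ρ.d (-1) w) = ρ.d (-1) (ρ.E k w) - (k : ℂ) • ρ.E k w := by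
  obtain ⟨n₁, h₁⟩ := ρ.exists_E_eq_sum hO w
  obtain ⟨n₂, h₂⟩ := ρ.exists_E_eq_sum hO (ρ.d (-1) w)
  rw [h₂ (n₁ + n₂ + 1) (by omega)]
  nth_rewrite 1 [h₁ (n₁ + n₂ + 1) (by omega)]
  rw [h₁ (n₁ + n₂) (by omega), map_sum, Finset.smul_sum]
  have key : ∀ i : ℕ, ((k : ℂ) ^ i / (Nat.factorial i : ℂ)) • ρ.d ((i : ℤ) - 1) (ρ.d (-1) w) =
      ρ.d (-1) (((k : ℂ) ^ i / (Nat.factorial i : ℂ)) • ρ.d ((i : ℤ) - 1) w) -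
        ((k : ℂ) ^ i / (Nat.factorial i : ℂ) * i) • ρ.d ((i : ℤ) - 1 - 1) w := by
    intro i
    rw [ρ.d_comm_apply (by omega), smul_sub, map_smul, smul_smul]
    push_cast
    rw [sub_add_cancel]
  rw [Finset.sum_congr rfl fun i _ => key i, Finset.sum_sub_distrib]
  congr 1
  rw [Finset.sum_range_succ']
  simp only [Nat.cast_zero, mul_zero, zero_smul, add_zero]
  refine Finset.sum_congr rfl fun i _ => ?_
  have h1 : (Nat.factorial i : ℂ) ≠ 0 := by exact_mod_cast Nat.factorial_ne_zero i
  have h2 : ((i : ℂ) + 1) ≠ 0 := by exact_mod_cast Nat.succ_ne_zero i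
  have hc : (k : ℂ) ^ (i + 1) / (Nat.factorial (i + 1) : ℂ) * ((i + 1 : ℕ) : ℂ) =
      k * ((k : ℂ) ^ i / (Nat.factorial i : ℂ)) := by
    rw [Nat.factorial_succ]
    push_cast
    field_simp
    ring
  rw [smul_smul, hc, show ((i + 1 : ℕ) : ℤ) - 1 - 1 = (i : ℤ) - 1 by push_cast; ring]

theorem E_highestWeight (ρ : WittRep W) {w₀ : W} {b : ℂ} (hw : ρ.IsHW w₀ b) (k : ℤ) :
    ρ.E k w₀ = ρ.d (-1) w₀ + ((k : ℂ) * b) • w₀ := by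
  have : ρ.E k w₀ = ∑ i ∈ Finset.range 2,
      (((k : ℂ) ^ i) / (Nat.factorial i : ℂ)) • ρ.d ((i : ℤ) - 1) w₀ := by
    apply finsum_eq_sum_of_support_subset
    intro i hi
    by_contra hlt
    simp only [Finset.coe_range, Set.mem_Iio, not_lt] at hlt
    apply hi
    change _ • ρ.d _ w₀ = 0
    rw [hw.2.2 _ (by omega), smul_zero]
  rw [this]
  simp [Finset.sum_range_succ, hw.2.1, smul_smul]

theorem E_polyVec (ρ : WittRep W) (hO : ρ.InO) {w₀ : W} {b : ℂ} (hw : ρ.IsHW w₀ b) (k : ℤ)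
    (f : ℂ[X]) :
    ρ.E k (ρ.polyVec w₀ f) =
      ρ.polyVec w₀ ((X + C ((k : ℂ) * b)) * f.comp (X - C (k : ℂ))) := by
  induction f using Polynomial.induction_on with
  | C c =>
    rw [← mul_one (C c), polyVec_C_mul, E_smul ρ hO, polyVec_one, E_highestWeight ρ hw, mul_one,
      C_comp, mul_comm _ (C c), polyVec_C_mul, map_add, ← mul_one X, polyVec_X_mul,
      ← mul_one (C _), polyVec_C_mul, polyVec_one]
  | add p q hp hq => rw [map_add, E_add ρ hO, hp, hq, ← map_add, add_comp, mul_add]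
  | monomial n c h =>
    rw [show C c * X ^ (n + 1) = X * (C c * X ^ n) by ring, polyVec_X_mul, E_d_neg_one ρ hO, h,
      ← polyVec_X_mul, ← polyVec_C_mul, ← map_sub, mul_comp (p := X), X_comp]
    congr 1
    ring

theorem polyVec_injective (ρ : WittRep W) (hO : ρ.InO) {w₀ : W} {b : ℂ} (hb : b ≠ 0)
    (hw : ρ.IsHW w₀ b) : Function.Injective (ρ.polyVec w₀) := by
  let I : Ideal ℂ[X] :=
    { carrier := {f | ρ.polyVec w₀ f = 0}
      add_mem' := fun hf hg => by
        simp only [Set.mem_ofPred_eq] at *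
        rw [map_add, hf, hg, add_zero]
      zero_mem' := map_zero _
      smul_mem' := fun c f hf => by
        simp only [Set.mem_ofPred_eq, smul_eq_mul] at *
        rw [polyVec_mul, hf, map_zero] }
  obtain ⟨g, hg⟩ : ∃ g, I = Ideal.span {g} := Submodule.IsPrincipal.principal I
  have hgI : ρ.polyVec w₀ g = 0 := by
    have : g ∈ I := hg ▸ Ideal.mem_span_singleton_self g
    exact this
  have hdvd : ∀ k : ℤ, g ∣ (X + C ((k : ℂ) * b)) * g.comp (X - C (k : ℂ)) := by
    intro k
    rw [← Ideal.mem_span_singleton, ← hg]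
    change ρ.polyVec w₀ _ = 0
    rw [← ρ.E_polyVec hO hw, hgI, E_zero]
  have hg0 : g = 0 := by
    by_contra hne
    have hdeg : g.degree ≠ 0 := by
      intro h
      rw [eq_C_of_degree_eq_zero h, ← mul_one (C _), polyVec_C_mul, polyVec_one] at hgI
      rcases smul_eq_zero.mp hgI with h0 | h0
      · rw [eq_C_of_degree_eq_zero h, h0, C_0] at hne
        exact hne rfl
      · exact hw.1 h0
    obtain ⟨r, hr⟩ := Complex.exists_root (f := g) (by
      rcases lt_or_ge 0 g.degree with h | h
      · exact h
      · exact absurd (le_antisymm h (zero_le_degree_iff.mpr hne)) hdeg)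
    have hfin : {x | IsRoot g x}.Finite := by
      refine (g.roots.toFinset.finite_toSet).subset fun x hx => ?_
      simpa [hne] using hx
    have hk : ∀ k : ℤ, r + k * b = 0 ∨ IsRoot g (r - k) := by
      intro k
      obtain ⟨q, hq⟩ := hdvd k
      have := congrArg (eval r) hq
      rw [eval_mul, eval_mul, hr.eq_zero, zero_mul] at this
      simpa [eval_comp, IsRoot] using this
    have hinf : {k : ℤ | ¬ (r + k * b = 0)}.Infinite := by
      have : {k : ℤ | r + k * b = 0}.Finite := by
        refine Set.Subsingleton.finite fun k hk l hl => ?_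
        have : (k : ℂ) * b = l * b := by
          simp only [Set.mem_ofPred_eq] at hk hl
          linear_combination hk - hl
        exact_mod_cast mul_right_cancel₀ hb this
      exact this.infinite_compl
    refine hinf ((hfin.preimage (f := fun k : ℤ => r - (k : ℂ)) ?_).subset ?_)
    · intro k _ l _ h
      have : (k : ℂ) = l := by
        simp only at h
        linear_combination -h
      exact_mod_cast this
    · intro k hk'
      exact (hk k).resolve_left hk'
  rw [injective_iff_map_eq_zero]
  intro f hf
  have : f ∈ I := hf
  rw [hg, hg0] at this
  simpa using this

theorem polyVec_surjective (ρ : WittRep W) (hs : ρ.IsSimple) {w₀ : W} {b : ℂ}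
    (hw : ρ.IsHW w₀ b) : Function.Surjective (ρ.polyVec w₀) := by
  rw [← LinearMap.range_eq_top]
  refine (hs.2 _ ?_).resolve_left fun h => hw.1 ?_
  · have key : ∀ (f : ℂ[X]) (i : ℤ), -1 ≤ i →
        ρ.d i (ρ.polyVec w₀ f) ∈ LinearMap.range (ρ.polyVec w₀) := by
      intro f
      induction f using Polynomial.induction_on with
      | C c =>
        intro i hi
        rw [← mul_one (C c), polyVec_C_mul, polyVec_one, map_smul]
        refine Submodule.smul_mem _ _ ?_
        rcases lt_trichotomy i 0 with h | h | h
        · obtain rfl : i = -1 := by omega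
          exact ⟨X * 1, by rw [polyVec_X_mul, polyVec_one]⟩
        · rw [h, hw.2.1]
          exact Submodule.smul_mem _ _ ⟨1, ρ.polyVec_one w₀⟩
        · rw [hw.2.2 i (by omega)]
          exact Submodule.zero_mem _
      | add p q hp hq =>
        intro i hi
        rw [map_add, map_add]
        exact Submodule.add_mem _ (hp i hi) (hq i hi)
      | monomial n c h =>
        intro i hi
        rw [show C c * X ^ (n + 1) = X * (C c * X ^ n) by ring, polyVec_X_mul]
        rcases eq_or_lt_of_le hi with rfl | hi'
        · exact ⟨X * (X * (C c * X ^ n)), by rw [polyVec_X_mul, polyVec_X_mul]⟩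
        · rw [ρ.d_comm_apply hi]
          refine Submodule.sub_mem _ ?_ (Submodule.smul_mem _ _ (h _ (by omega)))
          obtain ⟨g, hg⟩ := h i hi
          exact ⟨X * g, by rw [polyVec_X_mul, hg]⟩
    rintro i hi _ ⟨f, rfl⟩
    exact key f i hi
  · have : w₀ ∈ LinearMap.range (ρ.polyVec w₀) := ⟨1, ρ.polyVec_one w₀⟩
    rw [h] at this
    simpa using this

/-- `ℂ[X] ≃ W`, `f ↦ f(d_{-1}) w₀`, for a simple highest weight module with nonzero weight. -/
noncomputable def polyEquiv (ρ : WittRep W) (hO : ρ.InO) (hs : ρ.IsSimple) {w₀ : W} {b : ℂ}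
    (hb : b ≠ 0) (hw : ρ.IsHW w₀ b) : ℂ[X] ≃ₗ[ℂ] W :=
  LinearEquiv.ofBijective (ρ.polyVec w₀)
    ⟨ρ.polyVec_injective hO hb hw, ρ.polyVec_surjective hs hw⟩

theorem Lact_single (ρ : WittRep W) (lam a b : ℂ) (k j : ℤ) (w : W) :
    ρ.Lact lam a b k (Finsupp.single j w) = Finsupp.single (k + j)
      (lam ^ k • ρ.E k w - ρ.d (-1) w + (a + (k : ℂ) * b + (j : ℂ)) • w) := by
  rw [Lact, Finsupp.sum_single_index]
  simp [E_zero]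

theorem Lact_add (ρ : WittRep W) (hO : ρ.InO) (lam a b : ℂ) (k : ℤ) (f g : ℤ →₀ W) :
    ρ.Lact lam a b k (f + g) = ρ.Lact lam a b k f + ρ.Lact lam a b k g := by
  rw [Lact, Finsupp.sum_add_index']
  · rfl
  · intro j
    simp [E_zero]
  · intro j v w
    rw [← Finsupp.single_add, E_add ρ hO, map_add, smul_add, smul_add]
    congr 1
    abel

theorem Lact_zero_apply (ρ : WittRep W) (hO : ρ.InO) (lam a b : ℂ) (f : ℤ →₀ W) (j : ℤ) :
    ρ.Lact lam a b 0 f j = (a + j) • f j := by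
  induction f using Finsupp.induction_linear with
  | zero => simp [Lact]
  | add f g hf hg => rw [Lact_add ρ hO, Finsupp.add_apply, hf, hg, Finsupp.add_apply, smul_add]
  | single i w =>
    have hE : ρ.E 0 w = ρ.d (-1) w := by
      rw [E, finsum_eq_single _ 0]
      · simp
      · intro i hi
        simp [hi]
    rw [Lact_single ρ, hE]
    by_cases h : i = j
    · subst h
      simp
    · simp [h]

/-- The action of `d_k` on `f(d_{-1}) w₀ ⊗ t^j` in terms of `f`, with `α = a + j`. -/
noncomputable def polyAct (b : ℂ) (k : ℤ) (α : ℂ) (f : ℂ[X]) : ℂ[X] :=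
  C ((-1 : ℂ) ^ k) * ((X + C ((k : ℂ) * b)) * f.comp (X - C (k : ℂ))) +
    (C (α + k * (b + 1)) - X) * f

theorem Lact_single_polyVec (ρ : WittRep W) (hO : ρ.InO) {w₀ : W} {b : ℂ} (hw : ρ.IsHW w₀ b)
    (a : ℂ) (k j : ℤ) (f : ℂ[X]) :
    ρ.Lact (-1) a (b + 1) k (Finsupp.single j (ρ.polyVec w₀ f)) =
      Finsupp.single (k + j) (ρ.polyVec w₀ (polyAct b k (a + j) f)) := by
  rw [Lact_single ρ, E_polyVec ρ hO hw, ← polyVec_C_mul, ← polyVec_X_mul, ← polyVec_C_mul,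
    ← map_sub, ← map_add, polyAct]
  congr 2
  simp only [map_add]
  ring

/-- The span of `d₁^n · (w₀ ⊗ t^{2j+i})`, covering both `L₀` and `L₁`. -/
noncomputable def Lpar (ρ : WittRep W) (a b : ℂ) (w₀ : W) (i : ℤ) : Submodule ℂ (ℤ →₀ W) :=
  Submodule.span ℂ
    {g | ∃ (n : ℕ) (j : ℤ), g = (ρ.Lact (-1) a (b + 1) 1)^[n] (Finsupp.single (2 * j + i) w₀)}

theorem Lzero_eq_Lpar (ρ : WittRep W) (a b : ℂ) (w₀ : W) :
    ρ.Lzero a b w₀ = ρ.Lpar a b w₀ 0 := by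
  simp only [Lzero, Lpar, add_zero]

theorem Lone_eq_Lpar (ρ : WittRep W) (a b : ℂ) (w₀ : W) :
    ρ.Lone a b w₀ = ρ.Lpar a b w₀ 1 := rfl

/-- Existence of an isomorphism of Virasoro modules between submodules of `L(W₁, -1, a₁, b₁ + 1)`
and `L(W₂, -1, a₂, b₂ + 1)`. -/
def LIso {W₁ W₂ : Type*} [AddCommGroup W₁] [Module ℂ W₁] [AddCommGroup W₂] [Module ℂ W₂]
    (ρ₁ : WittRep W₁) (ρ₂ : WittRep W₂) (a₁ a₂ b₁ b₂ : ℂ)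
    (M₁ : Submodule ℂ (ℤ →₀ W₁)) (M₂ : Submodule ℂ (ℤ →₀ W₂)) : Prop :=
  ∃ φ : M₁ ≃ₗ[ℂ] M₂, ∀ (k : ℤ) (u : M₁) (hu : ρ₁.Lact (-1) a₁ (b₁ + 1) k ↑u ∈ M₁),
    (↑(φ ⟨ρ₁.Lact (-1) a₁ (b₁ + 1) k ↑u, hu⟩) : ℤ →₀ W₂) = ρ₂.Lact (-1) a₂ (b₂ + 1) k ↑(φ u)

section Iso

variable {W₁ W₂ : Type*} [AddCommGroup W₁] [Module ℂ W₁] [AddCommGroup W₂] [Module ℂ W₂]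

theorem LIso_self (ρ₁ : WittRep W₁) (ρ₂ : WittRep W₂) (hO₁ : ρ₁.InO) (hO₂ : ρ₂.InO)
    (hs₁ : ρ₁.IsSimple) (hs₂ : ρ₂.IsSimple) (a b : ℂ) (hb : b ≠ 0) {w₁ : W₁} {w₂ : W₂}
    (hw₁ : ρ₁.IsHW w₁ b) (hw₂ : ρ₂.IsHW w₂ b) (i : ℤ) :
    LIso ρ₁ ρ₂ a a b b (ρ₁.Lpar a b w₁ i) (ρ₂.Lpar a b w₂ i) := by
  let θ : W₁ ≃ₗ[ℂ] W₂ := (ρ₁.polyEquiv hO₁ hs₁ hb hw₁).symm.trans (ρ₂.polyEquiv hO₂ hs₂ hb hw₂)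
  have hθ : ∀ f, θ (ρ₁.polyVec w₁ f) = ρ₂.polyVec w₂ f := by
    intro f
    change ρ₂.polyEquiv hO₂ hs₂ hb hw₂ ((ρ₁.polyEquiv hO₁ hs₁ hb hw₁).symm
      (ρ₁.polyEquiv hO₁ hs₁ hb hw₁ f)) = _
    rw [LinearEquiv.symm_apply_apply]
    rfl
  let Θ : (ℤ →₀ W₁) ≃ₗ[ℂ] (ℤ →₀ W₂) := Finsupp.mapRange.linearEquiv θ
  have hΘ : ∀ j w, Θ (Finsupp.single j w) = Finsupp.single j (θ w) := by
    intro j w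
    simp [Θ]
  have hact : ∀ k f, Θ (ρ₁.Lact (-1) a (b + 1) k f) = ρ₂.Lact (-1) a (b + 1) k (Θ f) := by
    intro k f
    induction f using Finsupp.induction_linear with
    | zero => simp [Lact]
    | add f g hf hg => rw [Lact_add ρ₁ hO₁, map_add, map_add, Lact_add ρ₂ hO₂, hf, hg]
    | single j w =>
      obtain ⟨f, rfl⟩ := ρ₁.polyVec_surjective hs₁ hw₁ w
      rw [Lact_single_polyVec ρ₁ hO₁ hw₁, hΘ, hΘ, hθ, hθ, Lact_single_polyVec ρ₂ hO₂ hw₂]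
  have hiter : ∀ (n : ℕ) (j : ℤ),
      Θ ((ρ₁.Lact (-1) a (b + 1) 1)^[n] (Finsupp.single j w₁)) =
        (ρ₂.Lact (-1) a (b + 1) 1)^[n] (Finsupp.single j w₂) := by
    intro n j
    induction n with
    | zero =>
      have := hθ 1
      rw [polyVec_one, polyVec_one] at this
      simp only [Function.iterate_zero, id_eq, hΘ, this]
    | succ n ih => rw [Function.iterate_succ_apply', hact, ih, Function.iterate_succ_apply']
  have hmap : (ρ₁.Lpar a b w₁ i).map Θ.toLinearMap = ρ₂.Lpar a b w₂ i := by
    rw [Lpar, Submodule.map_span, Lpar]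
    congr 1
    ext g
    constructor
    · rintro ⟨_, ⟨n, j, rfl⟩, rfl⟩
      exact ⟨n, j, hiter n _⟩
    · rintro ⟨n, j, rfl⟩
      exact ⟨_, ⟨n, j, rfl⟩, hiter n _⟩
  exact ⟨(Θ.submoduleMap _).trans (LinearEquiv.ofEq _ _ hmap), fun k u hu => hact k u⟩

end Iso

theorem single_mem_Lpar (ρ : WittRep W) (a b : ℂ) (w₀ : W) {i j : ℤ} (h : 2 ∣ j - i) (c : ℂ) :
    Finsupp.single j (ρ.polyVec w₀ (C c)) ∈ ρ.Lpar a b w₀ i := by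
  obtain ⟨r, hr⟩ := h
  rw [← mul_one (C c), polyVec_C_mul, polyVec_one, ← Finsupp.smul_single]
  exact Submodule.smul_mem _ _ (Submodule.subset_span ⟨0, r, by simp [← hr]⟩)

theorem polyAct_one_one (b α : ℂ) : polyAct b 1 α 1 = C (α + 1) - 2 * X := by
  simp [polyAct]
  ring

theorem single_linear_mem_Lpar (ρ : WittRep W) (hO : ρ.InO) {w₀ : W} {b : ℂ}
    (hw : ρ.IsHW w₀ b) (a : ℂ) {i j : ℤ} (h : 2 ∣ j - 1 - i) (c : ℂ) :
    Finsupp.single j (ρ.polyVec w₀ (C c * (C (a + j) - 2 * X))) ∈ ρ.Lpar a b w₀ i := by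
  obtain ⟨r, hr⟩ := h
  rw [polyVec_C_mul, ← Finsupp.smul_single]
  refine Submodule.smul_mem _ _ (Submodule.subset_span ⟨1, r, ?_⟩)
  have := Lact_single_polyVec ρ hO hw a 1 (2 * r + i) 1
  rw [polyVec_one, polyAct_one_one] at this
  rw [Function.iterate_one, this, ← hr]
  congr 1
  · ring
  · push_cast
    ring_nf

theorem polyAct_one_linear (b : ℂ) (α : ℂ) :
    polyAct b 1 (α - 1) (C (α - 1) - 2 * X) =
      4 * X ^ 2 - C (4 * α) * X + C (α ^ 2 - α - 2 * b) := by
  simp [polyAct, map_ofNat C]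
  ring

theorem single_quadratic_mem_Lpar (ρ : WittRep W) (hO : ρ.InO) {w₀ : W} {b : ℂ}
    (hw : ρ.IsHW w₀ b) (a : ℂ) {i j : ℤ} (h : 2 ∣ j - i) (c : ℂ) :
    Finsupp.single j (ρ.polyVec w₀ (4 * X ^ 2 - C (4 * (a + j)) * X + C c)) ∈
      ρ.Lpar a b w₀ i := by
  have hpoly : 4 * X ^ 2 - C (4 * (a + j)) * X + C c =
      polyAct b 1 (a + j - 1) (C (a + j - 1) - 2 * X) +
        C (c - ((a + j) ^ 2 - (a + j) - 2 * b)) := by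
    rw [polyAct_one_linear, add_assoc, ← C_add, add_sub_cancel]
  rw [hpoly, map_add, Finsupp.single_add]
  refine Submodule.add_mem _ ?_ (ρ.single_mem_Lpar a b w₀ h _)
  obtain ⟨r, hr⟩ := h
  obtain rfl : j = 2 * r + i := by omega
  refine Submodule.subset_span ⟨2, r - 1, ?_⟩
  have h1 := Lact_single_polyVec ρ hO hw a 1 (2 * (r - 1) + i) 1
  rw [polyVec_one, polyAct_one_one] at h1
  rw [Function.iterate_succ_apply, Function.iterate_one, h1, Lact_single_polyVec ρ hO hw,
    show (1 : ℤ) + (1 + (2 * (r - 1) + i)) = 2 * r + i by ring,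
    show a + ((2 * (r - 1) + i : ℤ) : ℂ) + 1 = a + ((2 * r + i : ℤ) : ℂ) - 1 by push_cast; ring,
    show a + ((1 + (2 * (r - 1) + i) : ℤ) : ℂ) = a + ((2 * r + i : ℤ) : ℂ) - 1 by
      push_cast; ring]

theorem polyAct_even_C (b α c : ℂ) (r : ℤ) :
    polyAct b (2 * r) α (C c) = C (c * (α + 2 * r * (1 + 2 * b))) := by
  simp [polyAct, Even.neg_one_zpow (even_two_mul r), map_ofNat C]
  ring

theorem polyAct_odd_C (b α c : ℂ) {k : ℤ} (hk : Odd k) :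
    polyAct b k α (C c) = C c * (C (α + k) - 2 * X) := by
  simp [polyAct, hk.neg_one_zpow]
  ring

theorem polyAct_odd_linear (b α : ℂ) {k : ℤ} (hk : Odd k) :
    polyAct b k α (C α - 2 * X) =
      4 * X ^ 2 - C (4 * (α + k)) * X + C (α * (α + k) - 2 * b * k ^ 2) := by
  simp [polyAct, hk.neg_one_zpow, map_ofNat C]
  ring

theorem eval_polyAct (b α x : ℂ) (k : ℤ) (f : ℂ[X]) :
    (polyAct b k α f).eval x =
      (-1 : ℂ) ^ k * ((x + k * b) * f.eval (x - k)) + (α + k * (b + 1) - x) * f.eval x := by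
  simp [polyAct, eval_comp]

theorem natDegree_eq_zero_of_quadratic_mul {p Q q : ℂ[X]} (hQ : Q.natDegree = 2)
    (hq : q.natDegree ≤ 2)
    (h : ∀ r : ℤ, (Q * p).eval (2 * (r : ℂ)) = q.eval (2 * (r : ℂ))) : p.natDegree = 0 := by
  have hinj : Function.Injective fun r : ℤ => 2 * (r : ℂ) := fun r s hrs => by
    have : (r : ℂ) = s := mul_left_cancel₀ two_ne_zero hrs
    exact_mod_cast this
  have heq : Q * p = q := eq_of_infinite_eval_eq _ _
    ((Set.infinite_range_of_injective hinj).mono (by rintro _ ⟨r, rfl⟩; exact h r))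
  by_cases hp : p = 0
  · simp [hp]
  have hQ0 : Q ≠ 0 := by
    rintro rfl
    simp at hQ
  have := natDegree_mul hQ0 hp
  rw [heq, hQ] at this
  omega

/-- A polynomial that behaves under `d_{-m} d_m` and `d_{1-m} d_m` (`m` even) like a multiple of
a highest weight vector is constant. -/
theorem exists_eq_C_of_polyAct {b b' α : ℂ} (hb : b ≠ 0) {f : ℂ[X]}
    (h₀ : ∀ r : ℤ, polyAct b (-(2 * r)) (α + 2 * r) (polyAct b (2 * r) α f) =
      C ((α + 2 * r * (1 + 2 * b')) * (α - 4 * r * b')) * f)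
    (h₁ : ∀ r : ℤ, polyAct b (1 - 2 * r) (α + 2 * r) (polyAct b (2 * r) α f) =
      C (α + 2 * r * (1 + 2 * b')) * polyAct b 1 α f) :
    ∃ c, f = C c := by
  have hev : ∀ r : ℤ, (-1 : ℂ) ^ (2 * r) = 1 := fun r => (even_two_mul r).neg_one_zpow
  have hev' : ∀ r : ℤ, (-1 : ℂ) ^ (-(2 * r)) = 1 := fun r => (even_two_mul r).neg.neg_one_zpow
  have hod : ∀ r : ℤ, (-1 : ℂ) ^ (1 - 2 * r) = -1 := fun r =>
    (odd_one.sub_even (even_two_mul r)).neg_one_zpow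
  have hsum : (f.comp (C (α / 2) + X) + f.comp (C (α / 2) - X)).natDegree = 0 := by
    refine natDegree_eq_zero_of_quadratic_mul
      (Q := C (-(b * b)) * X ^ 2 + C 0 * X + C ((α / 2) ^ 2))
      (q := C (f.eval (α / 2)) * ((C α + X * C (1 + 2 * b')) * (C α - X * C (2 * b')) -
        ((C (α / 2) - X * C b) * (C α + X * C (2 * b + 2))))) ?_ ?_ fun r => ?_
    · exact natDegree_quadratic (neg_ne_zero.mpr (mul_ne_zero hb hb))
    · compute_degree
    · have := congrArg (eval (α / 2)) (h₀ r)
      rw [eval_polyAct, eval_polyAct, eval_polyAct, hev, hev', eval_mul, eval_C] at this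
      push_cast at this
      rw [show α / 2 - -(2 * (r : ℂ)) - 2 * r = α / 2 by ring,
        show α / 2 - -(2 * (r : ℂ)) = α / 2 + 2 * r by ring] at this
      simp only [eval_mul, eval_add, eval_sub, eval_comp, eval_C, eval_X, eval_pow]
      linear_combination this
  have hdiff : (f.comp (C ((α - 1) / 2) + X) - f.comp (C ((α + 1) / 2) - X)).natDegree = 0 := by
    refine natDegree_eq_zero_of_quadratic_mul
      (Q := C (b * b) * X ^ 2 + C (-(b * b)) * X + C (-((α + 1) / 2 * ((α + 1) / 2 + b))))
      (q := (C α + X * C (1 + 2 * b')) * C ((polyAct b 1 α f).eval ((α + 1) / 2)) +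
        (C ((α + 1) / 2 + b) - X * C b) *
          ((C ((α - 1) / 2) + X * C (1 + b)) * C (f.eval ((α - 1) / 2)) -
          (C ((α - 1) / 2) + X * C (1 + b)) * C (f.eval ((α + 1) / 2)))) ?_ ?_ fun r => ?_
    · exact natDegree_quadratic (mul_ne_zero hb hb)
    · compute_degree
    · have := congrArg (eval ((α + 1) / 2)) (h₁ r)
      rw [eval_mul, eval_polyAct (k := 1 - 2 * r), eval_polyAct (k := 2 * r),
        eval_polyAct (k := 2 * r), hev, hod, eval_C] at this
      push_cast at this
      rw [show (α + 1) / 2 - (1 - 2 * (r : ℂ)) - 2 * r = (α - 1) / 2 by ring,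
        show (α + 1) / 2 - (1 - 2 * (r : ℂ)) = (α - 1) / 2 + 2 * r by ring] at this
      simp only [eval_mul, eval_add, eval_sub, eval_comp, eval_C, eval_X, eval_pow]
      linear_combination this
  obtain ⟨c, hc⟩ := natDegree_eq_zero.mp hsum
  obtain ⟨d, hd⟩ := natDegree_eq_zero.mp hdiff
  refine ⟨(c + d) / 2, Polynomial.funext fun x => ?_⟩
  have e₁ := congrArg (eval (x - α / 2)) hc
  have e₂ := congrArg (eval (x - (α - 1) / 2)) hd
  simp only [eval_add, eval_sub, eval_comp, eval_C, eval_X, add_sub_cancel] at e₁ e₂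
  rw [show (α + 1) / 2 - (x - (α - 1) / 2) = α / 2 - (x - α / 2) by ring] at e₂
  rw [eval_C]
  linear_combination -(e₁ + e₂) / 2

section Iso

variable {W₁ W₂ : Type*} [AddCommGroup W₁] [Module ℂ W₁] [AddCommGroup W₂] [Module ℂ W₂]

theorem eq_of_LIso (ρ₁ : WittRep W₁) (ρ₂ : WittRep W₂) (hO₁ : ρ₁.InO) (hO₂ : ρ₂.InO)
    (hs₂ : ρ₂.IsSimple) {a₁ a₂ b₁ b₂ : ℂ}
    (ha₁ : 0 ≤ a₁.re ∧ a₁.re < 1) (ha₂ : 0 ≤ a₂.re ∧ a₂.re < 1) (hb₂ : b₂ ≠ 0)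
    {w₁ : W₁} {w₂ : W₂} (hw₁ : ρ₁.IsHW w₁ b₁) (hw₂ : ρ₂.IsHW w₂ b₂) (i : ℤ)
    (h : LIso ρ₁ ρ₂ a₁ a₂ b₁ b₂ (ρ₁.Lpar a₁ b₁ w₁ i) (ρ₂.Lpar a₂ b₂ w₂ i)) :
    a₁ = a₂ ∧ b₁ = b₂ := by
  set M₁ := ρ₁.Lpar a₁ b₁ w₁ i
  obtain ⟨φ, hφ⟩ := h
  have hconst : ∀ j : ℤ, 2 ∣ j - i → ∀ c, Finsupp.single j (ρ₁.polyVec w₁ (C c)) ∈ M₁ :=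
    fun j hj c => ρ₁.single_mem_Lpar a₁ b₁ w₁ hj c
  let v : M₁ := ⟨Finsupp.single i (ρ₁.polyVec w₁ (C 1)), hconst i (by simp) 1⟩
  have hv : (v : ℤ →₀ W₁) = Finsupp.single i (ρ₁.polyVec w₁ (C 1)) := rfl
  have hφv : (φ v : ℤ →₀ W₂) ≠ 0 := by
    intro h0
    have hv0 : v = 0 := by
      rw [← map_eq_zero_iff φ φ.injective]
      exact Subtype.ext h0
    have := congrArg (fun x : M₁ => (x : ℤ →₀ W₁) i) hv0
    simp only [hv, C_1, polyVec_one, Finsupp.single_eq_same] at this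
    exact hw₁.1 this
  -- weights
  have hd₀ : ρ₁.Lact (-1) a₁ (b₁ + 1) 0 v = (a₁ + i) • (v : ℤ →₀ W₁) := by
    ext j
    rw [Lact_zero_apply ρ₁ hO₁, Finsupp.smul_apply, hv]
    by_cases hj : j = i
    · rw [hj]
    · simp [Finsupp.single_eq_of_ne hj]
  have hmem₀ : ρ₁.Lact (-1) a₁ (b₁ + 1) 0 v ∈ M₁ := by
    rw [hd₀]
    exact M₁.smul_mem _ v.2
  have hweight : ∀ j, (φ v : ℤ →₀ W₂) j ≠ 0 → a₁ + i = a₂ + j := by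
    intro j hj
    have h1 := hφ 0 v hmem₀
    rw [show (⟨_, hmem₀⟩ : M₁) = (a₁ + i) • v from Subtype.ext hd₀, map_smul] at h1
    have h2 := congrArg (fun x : ℤ →₀ W₂ => x j) h1
    simp only [Lact_zero_apply ρ₂ hO₂, Submodule.coe_smul, Finsupp.smul_apply] at h2
    exact smul_left_injective ℂ hj h2
  have hindex : ∀ j : ℤ, a₁ + i = a₂ + j → j = i := by
    intro j hj
    have := congrArg Complex.re hj
    simp only [Complex.add_re, Complex.intCast_re] at this
    have h1 : (j : ℝ) - i < 1 := by linarith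
    have h2 : (i : ℝ) - j < 1 := by linarith
    have h1' : j - i < 1 := by exact_mod_cast h1
    have h2' : i - j < 1 := by exact_mod_cast h2
    omega
  obtain ⟨j₀, hj₀⟩ := Finsupp.ne_iff.mp hφv
  have ha : a₁ = a₂ := by
    have h1 := hweight j₀ hj₀
    rw [hindex _ h1] at h1
    exact add_right_cancel h1
  subst ha
  refine ⟨rfl, ?_⟩
  obtain ⟨f, hf⟩ := ρ₂.polyVec_surjective hs₂ hw₂ ((φ v : ℤ →₀ W₂) i)
  have hu : (φ v : ℤ →₀ W₂) = Finsupp.single i (ρ₂.polyVec w₂ f) := by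
    ext j
    by_cases hj : j = i
    · rw [hj, hf, Finsupp.single_eq_same]
    · rw [Finsupp.single_eq_of_ne hj]
      by_contra hne
      exact hj (hindex j (hweight j hne))
  have hf0 : f ≠ 0 := by
    rintro rfl
    rw [map_zero, Finsupp.single_zero] at hu
    exact hφv hu
  -- transport of products of two operators
  have hφ₁ : ∀ (k j : ℤ) (p : ℂ[X]) (q : ℂ[X])
      (hp : Finsupp.single j (ρ₁.polyVec w₁ p) ∈ M₁)
      (hkp : Finsupp.single (k + j) (ρ₁.polyVec w₁ (polyAct b₁ k (a₁ + j) p)) ∈ M₁),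
      (φ ⟨_, hp⟩ : ℤ →₀ W₂) = Finsupp.single j (ρ₂.polyVec w₂ q) →
      (φ ⟨_, hkp⟩ : ℤ →₀ W₂) =
        Finsupp.single (k + j) (ρ₂.polyVec w₂ (polyAct b₂ k (a₁ + j) q)) := by
    intro k j p q hp hkp hq
    have hL := Lact_single_polyVec ρ₁ hO₁ hw₁ a₁ k j p
    have h1 := hφ k ⟨_, hp⟩ (by rw [hL]; exact hkp)
    rw [hq, Lact_single_polyVec ρ₂ hO₂ hw₂] at h1
    rw [← h1]
    exact congrArg (fun x => ((φ x : ρ₂.Lpar a₁ b₂ w₂ i) : ℤ →₀ W₂)) (Subtype.ext hL.symm)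
  have hφ₂ : ∀ (k m : ℤ)
      (hm : Finsupp.single (m + i) (ρ₁.polyVec w₁ (polyAct b₁ m (a₁ + i) (C 1))) ∈ M₁)
      (hkm : Finsupp.single (k + (m + i)) (ρ₁.polyVec w₁
        (polyAct b₁ k (a₁ + (m + i : ℤ)) (polyAct b₁ m (a₁ + i) (C 1)))) ∈ M₁),
      (φ ⟨_, hkm⟩ : ℤ →₀ W₂) = Finsupp.single (k + (m + i)) (ρ₂.polyVec w₂
        (polyAct b₂ k (a₁ + (m + i : ℤ)) (polyAct b₂ m (a₁ + i) f))) := by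
    intro k m hm hkm
    exact hφ₁ k (m + i) _ _ hm hkm (hφ₁ m i _ _ v.2 hm hu)
  have hφsmul : ∀ (j j' : ℤ) (p p' : ℂ[X]) (q q' : ℂ[X]) (c : ℂ)
      (hp : Finsupp.single j (ρ₁.polyVec w₁ p) ∈ M₁)
      (hp' : Finsupp.single j' (ρ₁.polyVec w₁ p') ∈ M₁),
      (φ ⟨_, hp⟩ : ℤ →₀ W₂) = Finsupp.single j (ρ₂.polyVec w₂ q) →
      (φ ⟨_, hp'⟩ : ℤ →₀ W₂) = Finsupp.single j' (ρ₂.polyVec w₂ q') →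
      j' = j → p' = C c * p → q' = C c * q := by
    rintro j j' p p' q q' c hp hp' hq hq' rfl rfl
    have : (⟨_, hp'⟩ : M₁) = c • ⟨_, hp⟩ := by
      apply Subtype.ext
      simp only [polyVec_C_mul, Submodule.coe_smul, Finsupp.smul_single]
    rw [this, map_smul, Submodule.coe_smul, hq, Finsupp.smul_single, ← polyVec_C_mul] at hq'
    exact (ρ₂.polyVec_injective hO₂ hb₂ hw₂ (Finsupp.single_injective _ hq')).symm
  have hcast : ∀ m : ℤ, a₁ + ((m + i : ℤ) : ℂ) = a₁ + i + m := fun m => by push_cast; ring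
  have heven : ∀ r : ℤ,
      Finsupp.single (2 * r + i) (ρ₁.polyVec w₁ (polyAct b₁ (2 * r) (a₁ + i) (C 1))) ∈ M₁ := by
    intro r
    rw [polyAct_even_C]
    exact hconst _ (by simp) _
  have hodd : ∀ m : ℤ, Odd m →
      Finsupp.single (m + i) (ρ₁.polyVec w₁ (polyAct b₁ m (a₁ + i) (C 1))) ∈ M₁ := by
    intro m hm
    rw [polyAct_odd_C _ _ _ hm, ← hcast]
    refine ρ₁.single_linear_mem_Lpar hO₁ hw₁ a₁ ?_ _
    obtain ⟨s, rfl⟩ := hm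
    exact ⟨s, by ring⟩
  obtain ⟨c, rfl⟩ : ∃ c, f = C c := by
    refine exists_eq_C_of_polyAct (b' := b₁) (α := a₁ + i) hb₂ (fun r => ?_) fun r => ?_
    · have hpoly : polyAct b₁ (-(2 * r)) (a₁ + ((2 * r + i : ℤ) : ℂ))
          (polyAct b₁ (2 * r) (a₁ + i) (C 1)) =
          C ((a₁ + i + 2 * r * (1 + 2 * b₁)) * (a₁ + i - 4 * r * b₁)) * C 1 := by
        rw [polyAct_even_C, ← mul_neg, polyAct_even_C, ← C_mul]
        congr 1
        push_cast
        ring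
      have hmem : Finsupp.single (-(2 * r) + (2 * r + i)) (ρ₁.polyVec w₁
          (polyAct b₁ (-(2 * r)) (a₁ + ((2 * r + i : ℤ) : ℂ))
            (polyAct b₁ (2 * r) (a₁ + i) (C 1)))) ∈ M₁ := by
        rw [hpoly, ← C_mul]
        exact hconst _ (by simp) _
      have := hφsmul _ _ _ _ _ _ _ v.2 hmem hu (hφ₂ _ _ (heven r) hmem) (by ring) hpoly
      rw [hcast] at this
      push_cast at this
      exact this
    · have hpoly : polyAct b₁ (1 - 2 * r) (a₁ + ((2 * r + i : ℤ) : ℂ))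
          (polyAct b₁ (2 * r) (a₁ + i) (C 1)) =
          C (a₁ + i + 2 * r * (1 + 2 * b₁)) * polyAct b₁ 1 (a₁ + i) (C 1) := by
        rw [polyAct_even_C, polyAct_odd_C _ _ _ (odd_one.sub_even (even_two_mul r)),
          polyAct_odd_C _ _ _ odd_one, one_mul, C_1, one_mul]
        congr 3
        push_cast
        ring
      have hmem : Finsupp.single (1 - 2 * r + (2 * r + i)) (ρ₁.polyVec w₁
          (polyAct b₁ (1 - 2 * r) (a₁ + ((2 * r + i : ℤ) : ℂ))
            (polyAct b₁ (2 * r) (a₁ + i) (C 1)))) ∈ M₁ := by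
        rw [hpoly, polyVec_C_mul, ← Finsupp.smul_single,
          show 1 - 2 * r + (2 * r + i) = 1 + i by ring]
        exact M₁.smul_mem _ (hodd 1 odd_one)
      have := hφsmul _ _ _ _ _ _ _ (hodd 1 odd_one) hmem (hφ₁ 1 i _ _ v.2 (hodd 1 odd_one) hu)
        (hφ₂ _ _ (heven r) hmem) (by ring) hpoly
      rw [hcast] at this
      push_cast at this
      exact this
  -- comparison of `d_{-1} d_1 - d_3 d_{-3}` on both sides
  have hpp : ∀ (b c : ℂ) (m : ℤ), Odd m → polyAct b (-m) (a₁ + ((m + i : ℤ) : ℂ))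
      (polyAct b m (a₁ + i) (C c)) = C c * (4 * X ^ 2 - C (4 * (a₁ + i)) * X +
        C ((a₁ + i + m) * (a₁ + i) - 2 * b * m ^ 2)) := by
    intro b c m hm
    have hlin : ∀ p, polyAct b (-m) (a₁ + i + m) (C c * p) =
        C c * polyAct b (-m) (a₁ + i + m) p := by
      intro p
      simp only [polyAct, mul_comp, C_comp]
      ring
    rw [hcast, polyAct_odd_C _ _ _ hm, hlin, polyAct_odd_linear _ _ hm.neg]
    push_cast
    rw [add_neg_cancel_right, neg_sq]
  have hmm : ∀ m : ℤ, Odd m → Finsupp.single (-m + (m + i)) (ρ₁.polyVec w₁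
      (polyAct b₁ (-m) (a₁ + ((m + i : ℤ) : ℂ)) (polyAct b₁ m (a₁ + i) (C 1)))) ∈ M₁ := by
    intro m hm
    rw [hpp _ _ _ hm, neg_add_cancel_left, C_1, one_mul]
    exact ρ₁.single_quadratic_mem_Lpar hO₁ hw₁ a₁ (by simp) _
  have ho₃ : Odd (-3 : ℤ) := by decide
  have e₁ := hφ₂ _ _ (hodd 1 odd_one) (hmm 1 odd_one)
  have e₃ := hφ₂ _ _ (hodd (-3) ho₃) (hmm (-3) ho₃)
  have hrel : (⟨_, hmm 1 odd_one⟩ : M₁) - ⟨_, hmm (-3) ho₃⟩ =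
      (4 * (a₁ + i) + 16 * b₁) • v := by
    apply Subtype.ext
    rw [Submodule.coe_sub, Submodule.coe_smul, hv]
    simp only [hpp _ _ _ odd_one, hpp _ _ _ ho₃, neg_add_cancel_left]
    rw [← Finsupp.single_sub, ← map_sub, Finsupp.smul_single, ← polyVec_C_mul]
    congr 2
    simp [map_ofNat C]
    ring
  have hrel₂ := congrArg (fun x => ((φ x : ρ₂.Lpar a₁ b₂ w₂ i) : ℤ →₀ W₂)) hrel
  simp only [map_sub, map_smul, Submodule.coe_sub, Submodule.coe_smul] at hrel₂
  rw [e₁, e₃, hu, hpp _ _ _ odd_one, hpp _ _ _ ho₃, neg_add_cancel_left, neg_add_cancel_left,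
    ← Finsupp.single_sub, ← map_sub, Finsupp.smul_single, ← polyVec_C_mul] at hrel₂
  have hfin := congrArg (eval 0)
    (ρ₂.polyVec_injective hO₂ hb₂ hw₂ (Finsupp.single_injective _ hrel₂))
  simp only [eval_mul, eval_add, eval_sub, eval_C, eval_X, eval_pow] at hfin
  push_cast at hfin
  have hc : c ≠ 0 := by
    rintro rfl
    exact hf0 C_0
  apply mul_left_cancel₀ hc
  linear_combination -hfin / 16

end Iso

end WittRep

theorem stmt16 {W₁ W₂ : Type*} [AddCommGroup W₁] [Module ℂ W₁] [AddCommGroup W₂] [Module ℂ W₂]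
    (ρ₁ : WittRep W₁) (ρ₂ : WittRep W₂)
    (hO₁ : ρ₁.InO) (hO₂ : ρ₂.InO) (hnt₁ : ¬ ρ₁.IsTrivial) (hnt₂ : ¬ ρ₂.IsTrivial)
    (hs₁ : ρ₁.IsSimple) (hs₂ : ρ₂.IsSimple)
    (a₁ a₂ b₁ b₂ : ℂ)
    (ha₁ : 0 ≤ a₁.re ∧ a₁.re < 1) (ha₂ : 0 ≤ a₂.re ∧ a₂.re < 1)
    (hb₁ : b₁ ≠ 0) (hb₂ : b₂ ≠ 0)
    (w₁ : W₁) (w₂ : W₂) (hw₁ : ρ₁.IsHW w₁ b₁) (hw₂ : ρ₂.IsHW w₂ b₂) :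
    ((∃ φ : ↥(ρ₁.Lzero a₁ b₁ w₁) ≃ₗ[ℂ] ↥(ρ₂.Lzero a₂ b₂ w₂),
        ∀ (k : ℤ) (u : ↥(ρ₁.Lzero a₁ b₁ w₁))
          (hu : ρ₁.Lact (-1) a₁ (b₁ + 1) k ↑u ∈ ρ₁.Lzero a₁ b₁ w₁),
          (↑(φ ⟨ρ₁.Lact (-1) a₁ (b₁ + 1) k ↑u, hu⟩) : ℤ →₀ W₂) =
            ρ₂.Lact (-1) a₂ (b₂ + 1) k ↑(φ u)) ↔
      (a₁ = a₂ ∧ b₁ = b₂)) ∧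
    ((∃ φ : ↥(ρ₁.Lone a₁ b₁ w₁) ≃ₗ[ℂ] ↥(ρ₂.Lone a₂ b₂ w₂),
        ∀ (k : ℤ) (u : ↥(ρ₁.Lone a₁ b₁ w₁))
          (hu : ρ₁.Lact (-1) a₁ (b₁ + 1) k ↑u ∈ ρ₁.Lone a₁ b₁ w₁),
          (↑(φ ⟨ρ₁.Lact (-1) a₁ (b₁ + 1) k ↑u, hu⟩) : ℤ →₀ W₂) =
            ρ₂.Lact (-1) a₂ (b₂ + 1) k ↑(φ u)) ↔
      (a₁ = a₂ ∧ b₁ = b₂)) := by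
  rw [WittRep.Lzero_eq_Lpar, WittRep.Lzero_eq_Lpar, WittRep.Lone_eq_Lpar, WittRep.Lone_eq_Lpar]
  have key : ∀ i : ℤ, WittRep.LIso ρ₁ ρ₂ a₁ a₂ b₁ b₂ (ρ₁.Lpar a₁ b₁ w₁ i)
      (ρ₂.Lpar a₂ b₂ w₂ i) ↔ a₁ = a₂ ∧ b₁ = b₂ := by
    refine fun i => ⟨WittRep.eq_of_LIso ρ₁ ρ₂ hO₁ hO₂ hs₂ ha₁ ha₂ hb₂ hw₁ hw₂ i, ?_⟩
    rintro ⟨rfl, rfl⟩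
    exact WittRep.LIso_self ρ₁ ρ₂ hO₁ hO₂ hs₁ hs₂ a₁ b₁ hb₁ hw₁ hw₂ i
  exact ⟨key 0, key 1⟩
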